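/- Fix δ > 0 and ε > 0. Then there exist C > 0, η > 0 and n₀ such that for all n ≥ n₀ and all M, k with M/N ∈ [δ, 1−δ] and k/n ∈ [δ, 1−δ], with probability at least 1 − exp(−n^η) over G = G_{n,M} one has |Σ₁₁ − λ| ≤ C·λ·n^{−1/2+ε}, where Σ₁₁ = (2KK̄/(n²N²(n−2)(n−3)))·(M(N−M) + ((k−2)/(k̄−1))·N·V) and λ = ((n²−k²)k²/(2n⁴))·(M(N−M)/N²). -/

import Mathlib

/-!
With `p = M / N`, subtracting the mean degree `p (n - 1)` from every degree shows that `V` is the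
squared norm of the degree vector centred at its mean, so `V` is a quadratic form in the centred
edge indicators of the graph. The matrix of the form counts common endpoints of edges. Its diagonal
contributes exactly `2 N p (1 - p)`, because the number of edges is fixed at `M`.

The off-diagonal part is studied in the binomial model `G(n, p)`, where the edge indicators are
independent. Conditioning on `M` edges costs a factor of at most `N + 1`, since `M` is the mode of
the edge count. Ordering the edges turns the off-diagonal form into a martingale whose increments
are an edge indicator times a linear form in earlier ones. These linear forms are sub-Gaussian with
parameter `O(n)`; truncating them at scale `√n · n ^ (ε / 2)` makes the whole form sub-Gaussian on
the scale `√N · √n · n ^ (ε / 2)`. Hence `V = 2 N p (1 - p) + O(n ^ (3 / 2 + ε))`, except with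
exponentially small probability.

Finally `Σ₁₁` is affine in `V` with slope `O(n ^ (-2))`, its value at `V = 2 N p (1 - p)` is
`λ + O(1 / n)`, and `λ` is bounded below in terms of `δ`.
-/

open Finset MeasureTheory ProbabilityTheory

noncomputable section

/-- Uniform probability of an event `P` over a finite sample space `Ω`. -/
def Pru {α : Type*} (Ω : Finset α) (P : α → Prop) : ℝ := by
  classical exact ((Ω.filter P).card : ℝ) / Ω.card

/-- Expectation of `f` under the uniform distribution on `Ω`. -/
def Exu {α : Type*} (Ω : Finset α) (f : α → ℝ) : ℝ := (∑ a ∈ Ω, f a) / Ω.card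

/-- Variance of `f` under the uniform distribution on `Ω`. -/
def Varu {α : Type*} (Ω : Finset α) (f : α → ℝ) : ℝ := Exu Ω (fun a => (f a - Exu Ω f) ^ 2)

/-- Conditional expectation of `f` given the value of `g`, under uniform distribution on `Ω`. -/
def condExpU {α β : Type*} (Ω : Finset α) (f : α → ℝ) (g : α → β) (ω : α) : ℝ := by
  classical exact Exu (Ω.filter (fun ω' => g ω' = g ω)) f

/-- The edge set of the complete graph on `[n]`. -/
def completeEdges (n : ℕ) : Finset (Sym2 (Fin n)) := by
  classical exact Finset.univ.filter (fun e => ¬ e.IsDiag)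

/-- A finset of `Sym2`s is a graph if it has no loops. -/
def IsGraph {n : ℕ} (G : Finset (Sym2 (Fin n))) : Prop := ∀ e ∈ G, ¬ e.IsDiag

/-- The sample space of `G_{n,M}`: all graphs on `[n]` with exactly `M` edges. -/
def graphsM (n M : ℕ) : Finset (Finset (Sym2 (Fin n))) := by
  classical exact (completeEdges n).powerset.filter (fun G => G.card = M)

/-- `e(S)`: number of edges of `G` with both endpoints in `S`. -/
def edgesIn {n : ℕ} (G : Finset (Sym2 (Fin n))) (S : Finset (Fin n)) : ℕ := by
  classical exact (G.filter (fun e => ∀ v ∈ e, v ∈ S)).card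

/-- `d_S(v)`: number of neighbours of `v` (in graph `G`) lying in `S`. -/
def dS {n : ℕ} (G : Finset (Sym2 (Fin n))) (S : Finset (Fin n)) (v : Fin n) : ℕ := by
  classical exact (S.filter (fun w => s(v, w) ∈ G)).card

/-- All `k`-element subsets of `[n]`. -/
def kSets (n k : ℕ) : Finset (Finset (Fin n)) := Finset.univ.powersetCard k

/-- Probability of an event under the uniform random graph `G_{n,M}`. -/
def PrGnM (n M : ℕ) (P : Finset (Sym2 (Fin n)) → Prop) : ℝ := Pru (graphsM n M) P

/-- Probability of an event under the binomial random graph `G_{n,p}`. -/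
def PrGnp (n : ℕ) (p : ℝ) (P : Finset (Sym2 (Fin n)) → Prop) : ℝ := by
  classical exact ∑ G ∈ (completeEdges n).powerset,
    if (P G) then p ^ G.card * (1 - p) ^ ((completeEdges n).card - G.card) else 0

/-- `N = n(n-1)/2` as a real number. -/
def Nr (n : ℕ) : ℝ := (n : ℝ) * ((n : ℝ) - 1) / 2

/-- `K = k(k-1)/2` as a real number. -/
def Kr (k : ℕ) : ℝ := (k : ℝ) * ((k : ℝ) - 1) / 2

/-- `λ = ((n²-k²)k²/(2n⁴))·(M(N-M)/N²)`. -/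
def lamP (n M k : ℕ) : ℝ :=
  (((n:ℝ)^2 - (k:ℝ)^2) * (k:ℝ)^2 / (2 * (n:ℝ)^4)) * ((M:ℝ) * (Nr n - (M:ℝ)) / (Nr n)^2)

/-- The mean `K·M/N`. -/
def muP (n M k : ℕ) : ℝ := Kr k * (M:ℝ) / Nr n

/-- `W = (e(S) - K·M/N)/n`. -/
def Wfun (n M k : ℕ) (G : Finset (Sym2 (Fin n))) (S : Finset (Fin n)) : ℝ :=
  ((edgesIn G S : ℝ) - muP n M k) / n

/-- `V = Σ_v d(v)² - n·d(G)²`, i.e. `n` times the degree variance. -/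
def Vdeg {n : ℕ} (G : Finset (Sym2 (Fin n))) : ℝ :=
  (∑ v : Fin n, (dS G Finset.univ v : ℝ) ^ 2) - (n:ℝ) * (2 * (G.card : ℝ) / n) ^ 2

/-- Gaussian CDF with mean `m` and variance `v`. -/
def gaussCdf (m v z : ℝ) : ℝ := ((gaussianReal m v.toNNReal) (Set.Iic z)).toReal

/-- Gaussian measure of a set, mean `m`, variance `v`. -/
def gaussMeas (m v : ℝ) (A : Set ℝ) : ℝ := ((gaussianReal m v.toNNReal) A).toReal

/-- Gaussian density with mean `m` and variance `v`. -/
def gaussPdf (m v x : ℝ) : ℝ := gaussianPDFReal m v.toNNReal x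

/-- `P(Y ∈ ·)` for `Y ~ Bin(ν, p)`. -/
def binomPr (ν : ℕ) (p : ℝ) (P : ℕ → Prop) : ℝ := by
  classical exact ∑ j ∈ Finset.range (ν + 1),
    if (P j) then (ν.choose j : ℝ) * p ^ j * (1 - p) ^ (ν - j) else 0

/-- Sample space for "uniform `k`-set `S`, then uniform `x ∈ S` and `x̄ ∈ S̄`". -/
def SwapΩ (n k : ℕ) : Finset (Σ _ : Finset (Fin n), Fin n × Fin n) :=
  (kSets n k).sigma (fun S => S ×ˢ Sᶜ)

/-- A triple `(a, r, t)` is valid for `β`. -/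
def ValidTriple (β : ℝ) (n a r t : ℕ) : Prop :=
  a ≤ r ∧
  (∃ c : ℝ, 1/2 ≤ c ∧ c ≤ 1 ∧ (a : ℝ) = c * (t:ℝ) ^ ((3:ℝ)/2) * (n:ℝ) ^ (2*β - 1/2)) ∧
  (r : ℝ) ≤ (n:ℝ) ^ (-β) * Real.sqrt ((n:ℝ) * (t:ℝ))

open scoped NNReal

section SubGaussian

variable {Ω : Type*} {mΩ : MeasurableSpace Ω} {μ : Measure Ω} {X S Y : Ω → ℝ} {c cS : ℝ≥0}

lemma hasSubgaussianMGF_mono {c' : ℝ≥0} (hX : HasSubgaussianMGF X c μ) (hc : c ≤ c') :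
    HasSubgaussianMGF X c' μ where
  integrable_exp_mul := hX.integrable_exp_mul
  mgf_le t := (hX.mgf_le t).trans <| by gcongr

lemma measureReal_le_abs_le_of_hasSubgaussianMGF (hX : HasSubgaussianMGF X c μ) {t : ℝ}
    (ht : 0 ≤ t) :
    μ.real {ω | t ≤ |X ω|} ≤ 2 * Real.exp (-t ^ 2 / (2 * c)) := by
  have hsplit : {ω | t ≤ |X ω|} = {ω | t ≤ X ω} ∪ {ω | t ≤ (-X) ω} := by
    ext ω; simp [le_abs]
  rw [hsplit, two_mul]
  exact (measureReal_union_le _ _).trans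
    (add_le_add (hX.measure_ge_le ht) (hX.neg.measure_ge_le ht))

lemma integrable_exp_mul_add_mul_of_indepFun {B : ℝ}
    (hX : HasSubgaussianMGF X c μ) (hS : HasSubgaussianMGF S cS μ)
    (hY : AEMeasurable Y μ) (hYB : ∀ ω, |Y ω| ≤ B) (hind : X ⟂ᵢ[μ] S) (t : ℝ) :
    Integrable (fun ω ↦ Real.exp (t * (S ω + Y ω * X ω))) μ := by
  have hexp : ∀ r : ℝ, Integrable (fun ω ↦ Real.exp (r * X ω) * Real.exp (t * S ω)) μ := fun r ↦
    (hind.comp (φ := fun x ↦ Real.exp (r * x)) (ψ := fun x ↦ Real.exp (t * x))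
      (by fun_prop) (by fun_prop)).integrable_mul
      (hX.integrable_exp_mul r) (hS.integrable_exp_mul t)
  have hXm := hX.aemeasurable
  have hSm := hS.aemeasurable
  refine ((hexp (t * B)).add (hexp (-(t * B)))).mono' (by fun_prop) (ae_of_all _ fun ω ↦ ?_)
  have hle : |t * Y ω * X ω| ≤ |t * B * X ω| := by
    simp only [abs_mul]
    gcongr |t| * ?_ * |X ω|
    exact (hYB ω).trans (le_abs_self B)
  have hmax : Real.exp (t * Y ω * X ω) ≤ Real.exp (t * B * X ω) + Real.exp (-(t * B) * X ω) := by
    rcases le_abs'.mp ((le_abs_self _).trans hle) with h | h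
    · exact (Real.exp_le_exp.mpr (by linarith)).trans (le_add_of_nonneg_left (Real.exp_nonneg _))
    · exact (Real.exp_le_exp.mpr h).trans (le_add_of_nonneg_right (Real.exp_nonneg _))
  rw [Real.norm_of_nonneg (Real.exp_nonneg _), Pi.add_apply, ← add_mul,
    show t * (S ω + Y ω * X ω) = t * Y ω * X ω + t * S ω by ring, Real.exp_add]
  gcongr

lemma integral_comp_prodMk_of_indepFun [IsFiniteMeasure μ] {α β : Type*} [MeasurableSpace α]
    [MeasurableSpace β] {U : Ω → α} {Z : Ω → β} (hind : U ⟂ᵢ[μ] Z) (hU : AEMeasurable U μ)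
    (hZ : AEMeasurable Z μ) {F : α × β → ℝ} (hF : Measurable F)
    (hint : Integrable (fun ω ↦ F (U ω, Z ω)) μ) :
    ∫ ω, F (U ω, Z ω) ∂μ = ∫ ω, ∫ ω', F (U ω', Z ω) ∂μ ∂μ := by
  have hlaw := (indepFun_iff_map_prod_eq_prod_map_map hU hZ).mp hind
  have hFint : Integrable F ((μ.map U).prod (μ.map Z)) := by
    rwa [← hlaw, integrable_map_measure hF.aestronglyMeasurable (hU.prodMk hZ)]
  rw [← integral_map (hU.prodMk hZ) hF.aestronglyMeasurable, hlaw, integral_prod_symm _ hFint,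
    integral_map hZ hFint.integral_prod_right.aestronglyMeasurable]
  exact integral_congr_ae (ae_of_all _ fun ω ↦ integral_map hU
    (hF.comp measurable_prodMk_right).aestronglyMeasurable)

lemma integral_exp_add_mul_le_of_abs_le (hX : HasSubgaussianMGF X c μ) {B y : ℝ} (hy : |y| ≤ B)
    (s t : ℝ) :
    ∫ ω, Real.exp (t * (s + y * X ω)) ∂μ ≤
      Real.exp (t * s) * Real.exp (B ^ 2 * c * t ^ 2 / 2) := calc
  _ = Real.exp (t * s) * mgf X μ (t * y) := by
    rw [mgf, ← integral_const_mul]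
    simp only [← Real.exp_add]
    ring_nf
  _ ≤ Real.exp (t * s) * Real.exp (y ^ 2 * (c * t ^ 2) / 2) := by
    rw [show y ^ 2 * (c * t ^ 2) = c * (t * y) ^ 2 by ring]
    gcongr
    exact hX.mgf_le _
  _ ≤ Real.exp (t * s) * Real.exp (B ^ 2 * (c * t ^ 2) / 2) := by
    have : y ^ 2 ≤ B ^ 2 := sq_le_sq.mpr (hy.trans (le_abs_self B))
    gcongr
  _ = _ := by rw [← mul_assoc]

theorem hasSubgaussianMGF_add_mul_of_indepFun [IsFiniteMeasure μ] {B : ℝ≥0}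
    (hX : HasSubgaussianMGF X c μ) (hS : HasSubgaussianMGF S cS μ)
    (hY : AEMeasurable Y μ) (hYB : ∀ ω, |Y ω| ≤ B) (hind : X ⟂ᵢ[μ] (fun ω ↦ (S ω, Y ω))) :
    HasSubgaussianMGF (fun ω ↦ S ω + Y ω * X ω) (cS + B ^ 2 * c) μ := by
  have hint := integrable_exp_mul_add_mul_of_indepFun hX hS hY hYB
    (hind.comp measurable_id measurable_fst)
  refine ⟨hint, fun t ↦ ?_⟩
  calc ∫ ω, Real.exp (t * (S ω + Y ω * X ω)) ∂μ
      = ∫ ω, ∫ ω', Real.exp (t * (S ω + Y ω * X ω')) ∂μ ∂μ :=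
        integral_comp_prodMk_of_indepFun (F := fun z ↦ Real.exp (t * (z.2.1 + z.2.2 * z.1)))
          hind hX.aemeasurable (hS.aemeasurable.prodMk hY) (by fun_prop) (hint t)
    _ ≤ ∫ ω, Real.exp (t * S ω) * Real.exp (B ^ 2 * c * t ^ 2 / 2) ∂μ :=
        integral_mono_of_nonneg
          (ae_of_all _ fun ω ↦ integral_nonneg fun ω' ↦ Real.exp_nonneg _)
          ((hS.integrable_exp_mul t).mul_const _)
          (ae_of_all _ fun ω ↦ integral_exp_add_mul_le_of_abs_le hX (hYB ω) _ _)
    _ = mgf S μ t * Real.exp (B ^ 2 * c * t ^ 2 / 2) := integral_mul_const _ _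
    _ ≤ Real.exp (cS * t ^ 2 / 2) * Real.exp (B ^ 2 * c * t ^ 2 / 2) := by
        gcongr
        exact hS.mgf_le t
    _ = Real.exp ((cS + B ^ 2 * c : ℝ≥0) * t ^ 2 / 2) := by
        rw [← Real.exp_add]
        push_cast
        ring_nf

variable {ι : Type*} {Z : ι → Ω → ℝ} {v : ι → ℝ≥0}

theorem hasSubgaussianMGF_sum_mul_of_iIndepFun [LinearOrder ι] {W : ι → Ω → ℝ} {b : ι → ℝ≥0}
    (s : Finset ι) (hind : iIndepFun Z μ) (hZm : ∀ i, Measurable (Z i))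
    (hZ : ∀ i ∈ s, HasSubgaussianMGF (Z i) (v i) μ)
    (hW : ∀ i ∈ s, Measurable[⨆ j ∈ Set.Iio i, MeasurableSpace.comap (Z j) inferInstance] (W i))
    (hWb : ∀ i ∈ s, ∀ ω, |W i ω| ≤ b i) :
    HasSubgaussianMGF (fun ω ↦ ∑ i ∈ s, W i ω * Z i ω) (∑ i ∈ s, b i ^ 2 * v i) μ := by
  have := hind.isProbabilityMeasure
  let past (i : ι) : MeasurableSpace Ω := ⨆ j ∈ Set.Iio i, .comap (Z j) inferInstance
  have hpast_le (i : ι) : past i ≤ mΩ := iSup₂_le fun j _ ↦ (hZm j).comap_le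
  have hpast_mono : Monotone past := fun i j hij ↦ biSup_mono fun l hl ↦ lt_of_lt_of_le hl hij
  have hZpast {j i : ι} (hji : j < i) : Measurable[past i] (Z j) :=
    (comap_measurable _).mono (le_biSup (fun l ↦ MeasurableSpace.comap (Z l) _) hji) le_rfl
  induction s using Finset.induction_on_max with
  | empty => simp [HasSubgaussianMGF.fun_zero]
  | insert i s hlt ih =>
    have hi : i ∉ s := fun h ↦ lt_irrefl i (hlt i h)
    simp only [Finset.forall_mem_insert] at hZ hW hWb
    have hS : Measurable[past i] fun ω ↦ ∑ j ∈ s, W j ω * Z j ω :=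
      Finset.measurable_sum s fun j hj ↦
        ((hW.2 j hj).mono (hpast_mono (hlt j hj).le) le_rfl).mul (hZpast (hlt j hj))
    have hi_past : Indep (.comap (Z i) inferInstance) (past i) μ := by
      simpa [past] using indep_iSup_of_disjoint (S := {i}) (T := Set.Iio i)
        (fun j ↦ (hZm j).comap_le) ((iIndepFun_iff_iIndep _ _ _).mp hind) (by simp)
    have hind_i : Z i ⟂ᵢ[μ] fun ω ↦ (∑ j ∈ s, W j ω * Z j ω, W i ω) :=
      (IndepFun_iff_Indep ..).mpr <|
        indep_of_indep_of_le_right hi_past (hS.prodMk hW.1).comap_le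
    simp only [Finset.sum_insert hi, add_comm (W i _ * Z i _), add_comm (b i ^ 2 * v i)]
    exact hasSubgaussianMGF_add_mul_of_indepFun hZ.1 (ih hZ.2 hW.2 hWb.2)
      (hW.1.mono (hpast_le i) le_rfl).aemeasurable hWb.1 hind_i

lemma sum_sum_erase_eq_two_mul_sum_filter_lt [LinearOrder ι] (s : Finset ι) {f : ι → ι → ℝ}
    (hf : ∀ i j, f i j = f j i) :
    ∑ i ∈ s, ∑ j ∈ s.erase i, f i j = 2 * ∑ i ∈ s, ∑ j ∈ s with j < i, f i j := by
  have hsplit (i : ι) :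
      ∑ j ∈ s.erase i, f i j = ∑ j ∈ s with j < i, f i j + ∑ j ∈ s with i < j, f i j := by
    rw [← Finset.sum_filter_add_sum_filter_not (s.erase i) (· < i)]
    congr 2 <;> grind
  have hswap : ∑ i ∈ s, ∑ j ∈ s with i < j, f i j = ∑ i ∈ s, ∑ j ∈ s with j < i, f i j := by
    simp only [Finset.sum_filter]
    rw [Finset.sum_comm]
    simp only [hf]
  simp only [hsplit, Finset.sum_add_distrib, hswap, two_mul]

lemma hasSubgaussianMGF_sum_const_mul_of_iIndepFun {w : ι → ℝ} {σ c : ℝ≥0} (s : Finset ι)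
    (hind : iIndepFun Z μ) (hZ : ∀ i ∈ s, HasSubgaussianMGF (Z i) c μ)
    (hw : ∑ i ∈ s, w i ^ 2 ≤ σ) :
    HasSubgaussianMGF (fun ω ↦ ∑ i ∈ s, w i * Z i ω) (σ * c) μ := by
  refine hasSubgaussianMGF_mono (HasSubgaussianMGF.sum_of_iIndepFun
    (hind.comp (fun i x ↦ w i * x) fun i ↦ measurable_const_mul (w i))
    fun i hi ↦ (hZ i hi).const_mul (w i)) (NNReal.coe_le_coe.mp ?_)
  rw [NNReal.coe_sum]
  exact (Finset.sum_mul s _ _).ge.trans (mul_le_mul_of_nonneg_right hw c.2)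

lemma measureReal_exists_le_abs_le {Y : ι → Ω → ℝ} (s : Finset ι)
    (hY : ∀ i ∈ s, HasSubgaussianMGF (Y i) c μ) {B : ℝ} (hB : 0 ≤ B) :
    μ.real {ω | ∃ i ∈ s, B ≤ |Y i ω|} ≤ #s * (2 * Real.exp (-B ^ 2 / (2 * c))) := by
  have hunion : {ω | ∃ i ∈ s, B ≤ |Y i ω|} = ⋃ i ∈ s, {ω | B ≤ |Y i ω|} := by
    ext ω
    simp
  rw [hunion, ← nsmul_eq_mul]
  exact (measureReal_biUnion_finset_le s _).trans <|
    Finset.sum_le_card_nsmul s _ _ fun i hi ↦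
      measureReal_le_abs_le_of_hasSubgaussianMGF (hY i hi) hB

theorem measureReal_le_abs_sum_mul_sum_lt_le [LinearOrder ι] {a : ι → ι → ℝ} {σ B : ℝ≥0} {t : ℝ}
    (s : Finset ι) (ha : ∀ i ∈ s, ∑ j ∈ s, a i j ^ 2 ≤ σ) (hind : iIndepFun Z μ)
    (hZm : ∀ i, Measurable (Z i)) (hZ : ∀ i ∈ s, HasSubgaussianMGF (Z i) c μ) (ht : 0 ≤ t) :
    μ.real {ω | t ≤ |∑ i ∈ s, (∑ j ∈ s with j < i, a i j * Z j ω) * Z i ω|} ≤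
      2 * Real.exp (-t ^ 2 / (2 * (#s * (B ^ 2 * c)))) +
        #s * (2 * Real.exp (-B ^ 2 / (2 * (σ * c)))) := by
  have := hind.isProbabilityMeasure
  let Y (i : ι) (ω : Ω) : ℝ := ∑ j ∈ s with j < i, a i j * Z j ω
  have hY (i : ι) (hi : i ∈ s) : HasSubgaussianMGF (Y i) (σ * c) μ :=
    hasSubgaussianMGF_sum_const_mul_of_iIndepFun _ hind
      (fun j hj ↦ hZ j (Finset.mem_filter.mp hj).1)
      ((Finset.sum_le_sum_of_subset_of_nonneg (Finset.filter_subset _ s)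
        fun j _ _ ↦ sq_nonneg (a i j)).trans (ha i hi))
  have hYpast (i : ι) :
      Measurable[⨆ j ∈ Set.Iio i, MeasurableSpace.comap (Z j) inferInstance] (Y i) :=
    Finset.measurable_sum _ fun j hj ↦
      ((comap_measurable (Z j)).mono (le_biSup (fun l ↦ MeasurableSpace.comap (Z l) _)
        (Finset.mem_filter.mp hj).2) le_rfl).const_mul (a i j)
  -- Truncating `Y i` makes the form a martingale with sub-Gaussian increments, and changes nothing
  -- unless some `Y i` exceeds `B`.
  have htrunc : HasSubgaussianMGF (fun ω ↦ ∑ i ∈ s, truncation (Y i) B ω * Z i ω)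
      (∑ _i ∈ s, B ^ 2 * c) μ :=
    hasSubgaussianMGF_sum_mul_of_iIndepFun s hind hZm hZ
      (fun i _ ↦ (measurable_id.indicator measurableSet_Ioc).comp (hYpast i))
      fun i _ ω ↦ by simpa using abs_truncation_le_bound (Y i) B ω
  have hsub : {ω | t ≤ |∑ i ∈ s, Y i ω * Z i ω|} ⊆
      {ω | t ≤ |∑ i ∈ s, truncation (Y i) B ω * Z i ω|} ∪ {ω | ∃ i ∈ s, B ≤ |Y i ω|} := by
    intro ω hω
    by_contra! hnot
    simp only [Set.mem_union, Set.mem_ofPred_eq, not_or, not_exists, not_and, not_le] at hω hnot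
    have heq : ∑ i ∈ s, truncation (Y i) B ω * Z i ω = ∑ i ∈ s, Y i ω * Z i ω :=
      Finset.sum_congr rfl fun i hi ↦ by rw [truncation_eq_self (hnot.2 i hi)]
    exact hnot.1.not_ge (heq ▸ hω)
  refine (measureReal_mono hsub).trans ((measureReal_union_le _ _).trans (add_le_add ?_ ?_))
  · simpa using measureReal_le_abs_le_of_hasSubgaussianMGF htrunc ht
  · simpa using measureReal_exists_le_abs_le s hY B.2

theorem measureReal_le_abs_sum_sum_erase_le [DecidableEq ι] {a : ι → ι → ℝ} {σ B : ℝ≥0} {t : ℝ}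
    (s : Finset ι) (hsymm : ∀ i j, a i j = a j i) (ha : ∀ i ∈ s, ∑ j ∈ s, a i j ^ 2 ≤ σ)
    (hind : iIndepFun Z μ) (hZm : ∀ i, Measurable (Z i))
    (hZ : ∀ i ∈ s, HasSubgaussianMGF (Z i) c μ) (ht : 0 ≤ t) :
    μ.real {ω | 2 * t ≤ |∑ i ∈ s, ∑ j ∈ s.erase i, a i j * Z j ω * Z i ω|} ≤
      2 * Real.exp (-t ^ 2 / (2 * (#s * (B ^ 2 * c)))) +
        #s * (2 * Real.exp (-B ^ 2 / (2 * (σ * c)))) := by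
  let _ : LinearOrder ι := IsWellOrder.linearOrder WellOrderingRel
  obtain rfl : ‹DecidableEq ι› = LinearOrder.toDecidableEq := Subsingleton.elim _ _
  convert measureReal_le_abs_sum_mul_sum_lt_le s ha hind hZm hZ ht using 4 with ω
  rw [sum_sum_erase_eq_two_mul_sum_filter_lt s fun i j ↦ by rw [hsymm]; ring,
    abs_mul, abs_two, mul_le_mul_iff_right₀ two_pos]
  simp only [Finset.sum_mul]

theorem measureReal_mul_sqrt_le_abs_sum_sum_erase_le [DecidableEq ι] {a : ι → ι → ℝ} {σ : ℝ≥0}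
    {s : Finset ι} (hs : s.Nonempty) (hσ : 0 < σ) (hc : 0 < c) (hsymm : ∀ i j, a i j = a j i)
    (ha : ∀ i ∈ s, ∑ j ∈ s, a i j ^ 2 ≤ σ) (hind : iIndepFun Z μ) (hZm : ∀ i, Measurable (Z i))
    (hZ : ∀ i ∈ s, HasSubgaussianMGF (Z i) c μ) (y : ℝ≥0) :
    μ.real {ω | 2 * (c * y * √(#s * σ)) ≤ |∑ i ∈ s, ∑ j ∈ s.erase i, a i j * Z j ω * Z i ω|} ≤
      2 * (#s + 1) * Real.exp (-y / 2) := by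
  have : (0 : ℝ) < #s := mod_cast hs.card_pos
  have htail := measureReal_le_abs_sum_sum_erase_le (B := NNReal.sqrt (σ * c * y))
    (t := c * y * √(#s * σ)) s hsymm ha hind hZm hZ (by positivity)
  have hmain : -(c * y * √(#s * σ)) ^ 2 / (2 * (#s * (√(σ * c * y) ^ 2 * c))) = (-y / 2 : ℝ) := by
    rw [mul_pow, Real.sq_sqrt (by positivity), Real.sq_sqrt (by positivity)]
    field
  have hside : -√(σ * c * y) ^ 2 / (2 * (σ * c)) = (-y / 2 : ℝ) := by
    rw [Real.sq_sqrt (by positivity)]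
    field
  push_cast at htail
  rw [hmain, hside] at htail
  linarith

end SubGaussian

section RandomSubset

open unitInterval

variable {ι : Type*} {u : Set ι} {p : I}

/-- The indicator of `i ∈ s` minus `p`. As a function of a random set `s` containing `i` with
probability `p`, it is the centred indicator of the event `i ∈ s`. -/
def centeredIndicator (p : ℝ) (i : ι) (s : Set ι) : ℝ := s.indicator 1 i - p

lemma measurable_indicator_apply (i : ι) :
    Measurable fun s : Set ι ↦ s.indicator (1 : ι → ℝ) i := by
  classical
  simp only [Set.indicator_apply]
  exact Measurable.ite (measurableSet_setOfPred.2 (measurable_set_mem i)) measurable_const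
    measurable_const

lemma measurable_centeredIndicator (p : ℝ) (i : ι) : Measurable (centeredIndicator p i) :=
  (measurable_indicator_apply i).sub_const p

lemma map_mem_setBernoulli (u : Set ι) (p : I) (i : ι) :
    setBer(u, p).map (i ∈ ·) = Ber(i ∈ u, False, p) := by
  rw [setBernoulli_eq_map, Measure.map_map (measurable_set_mem i) (by fun_prop)]
  exact Measure.infinitePi_map_eval (fun i ↦ Ber(i ∈ u, False, p)) i

lemma iIndepFun_mem_setBernoulli (u : Set ι) (p : I) :
    iIndepFun (fun (i : ι) (s : Set ι) ↦ i ∈ s) setBer(u, p) := by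
  rw [iIndepFun_iff_map_fun_eq_infinitePi_map measurable_set_mem]
  simp only [map_mem_setBernoulli]
  rw [setBernoulli_eq_map, Measure.map_map (by fun_prop) (by fun_prop)]
  exact Measure.map_id

lemma integral_indicator_setBernoulli (p : I) {i : ι} (hi : i ∈ u) :
    ∫ s, s.indicator (1 : ι → ℝ) i ∂setBer(u, p) = p := by
  classical
  calc ∫ s, s.indicator (1 : ι → ℝ) i ∂setBer(u, p)
      = ∫ q, (if q then 1 else 0) ∂setBer(u, p).map (i ∈ ·) := by
        rw [integral_map (measurable_set_mem i).aemeasurable (by fun_prop)]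
        simp only [Set.indicator_apply, Pi.one_apply]
    _ = p := by simp [map_mem_setBernoulli, integral_bernoulliMeasure, hi]

lemma iIndepFun_centeredIndicator (u : Set ι) (p : I) :
    iIndepFun (centeredIndicator p) setBer(u, p) := by
  classical
  have heq : centeredIndicator (ι := ι) p =
      fun i ↦ (fun q : Prop ↦ (if q then (1 : ℝ) else 0) - p) ∘ (i ∈ ·) := by
    ext i s
    simp [centeredIndicator, Set.indicator_apply]
  rw [heq]
  exact (iIndepFun_mem_setBernoulli u p).comp _ fun _ ↦ .of_discrete

lemma hasSubgaussianMGF_centeredIndicator (p : I) {i : ι} (hi : i ∈ u) :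
    HasSubgaussianMGF (centeredIndicator p i) (1 / 4) setBer(u, p) := by
  have h := hasSubgaussianMGF_of_mem_Icc (a := 0) (b := 1) (μ := setBer(u, p))
    (measurable_indicator_apply i).aemeasurable
    (ae_of_all _ fun s ↦ ⟨Set.indicator_nonneg (fun _ _ ↦ zero_le_one) i,
      Set.indicator_le_self' (fun _ _ ↦ zero_le_one) i⟩)
  rw [integral_indicator_setBernoulli p hi] at h
  have hquarter : (‖(1 : ℝ) - 0‖₊ / 2) ^ 2 = 1 / 4 := by
    rw [sub_zero, nnnorm_one]
    norm_num
  exact hquarter ▸ h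

lemma factorial_mul_pow_le (M k : ℕ) : M.factorial * M ^ k ≤ k.factorial * M ^ M := by
  rcases le_total M k with h | h
  · calc M.factorial * M ^ k = M.factorial * M ^ (k - M) * M ^ M := by
          rw [mul_assoc, ← pow_add, Nat.sub_add_cancel h]
      _ ≤ k.factorial * M ^ M := by
          gcongr
          exact Nat.factorial_mul_pow_sub_le_factorial h
  · calc M.factorial * M ^ k = k.factorial * M.descFactorial (M - k) * M ^ k := by
          rw [← Nat.factorial_mul_descFactorial (Nat.sub_le M k), Nat.sub_sub_self h]
      _ ≤ k.factorial * M ^ (M - k) * M ^ k := by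
          gcongr
          exact Nat.descFactorial_le_pow M _
      _ = k.factorial * M ^ M := by
          rw [mul_assoc, ← pow_add, Nat.sub_add_cancel h]

-- Up to the common factor `N ^ N`, this says that the binomial law of mean `M` has its mode at `M`.
lemma choose_mul_pow_mul_pow_le {N M k : ℕ} (hM : M ≤ N) (hk : k ≤ N) :
    N.choose k * M ^ k * (N - M) ^ (N - k) ≤ N.choose M * M ^ M * (N - M) ^ (N - M) := by
  have hpos : 0 < k.factorial * (N - k).factorial * (M.factorial * (N - M).factorial) := by
    positivity
  refine Nat.le_of_mul_le_mul_left ?_ hpos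
  calc _ = (N.choose k * k.factorial * (N - k).factorial) * ((M.factorial * M ^ k) *
          ((N - M).factorial * (N - M) ^ (N - k))) := by ring
    _ = N.factorial * ((M.factorial * M ^ k) * ((N - M).factorial * (N - M) ^ (N - k))) := by
        rw [Nat.choose_mul_factorial_mul_factorial hk]
    _ ≤ N.factorial * ((k.factorial * M ^ M) * ((N - k).factorial * (N - M) ^ (N - M))) :=
        Nat.mul_le_mul_left _ (Nat.mul_le_mul (factorial_mul_pow_le _ _) (factorial_mul_pow_le _ _))
    _ = (N.choose M * M.factorial * (N - M).factorial) * ((k.factorial * M ^ M) *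
          ((N - k).factorial * (N - M) ^ (N - M))) := by
        rw [Nat.choose_mul_factorial_mul_factorial hM]
    _ = _ := by ring

lemma pow_le_succ_mul_choose_mul_pow {N M : ℕ} (hM : M ≤ N) :
    N ^ N ≤ (N + 1) * (N.choose M * M ^ M * (N - M) ^ (N - M)) := by
  calc N ^ N = ∑ k ∈ Finset.range (N + 1), M ^ k * (N - M) ^ (N - k) * N.choose k := by
        simpa [Nat.add_sub_cancel' hM] using add_pow M (N - M) N
    _ ≤ ∑ _k ∈ Finset.range (N + 1), N.choose M * M ^ M * (N - M) ^ (N - M) :=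
        Finset.sum_le_sum fun k hk ↦ (by ring : _ = _).trans_le
          (choose_mul_pow_mul_pow_le hM (Finset.mem_range_succ_iff.mp hk))
    _ = _ := by simp

lemma one_le_succ_mul_choose_mul_pow {N M : ℕ} {p : ℝ} (hM : M ≤ N) (hp : p * N = M) :
    1 ≤ (N + 1) * (N.choose M * p ^ M * (1 - p) ^ (N - M)) := by
  rcases N.eq_zero_or_pos with rfl | hN
  · simp_all
  have hNr : (0 : ℝ) < (N : ℝ) ^ N := by positivity
  have hpow : (N : ℝ) ^ N = N ^ M * N ^ (N - M) := by rw [← pow_add, Nat.add_sub_cancel' hM]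
  have hq : (1 - p) * N = ((N - M : ℕ) : ℝ) := by
    push_cast [hM]
    linear_combination -hp
  refine le_of_mul_le_mul_right ?_ hNr
  calc 1 * (N : ℝ) ^ N ≤ (N + 1) * (N.choose M * M ^ M * (N - M : ℕ) ^ (N - M)) := by
        rw [one_mul]
        exact_mod_cast pow_le_succ_mul_choose_mul_pow hM
    _ = _ := by
        rw [← hq, ← hp, hpow, mul_pow, mul_pow]
        ring

variable {A : Finset ι} {M : ℕ}

lemma card_mul_le_measureReal_setBernoulli [Countable ι] {S : Finset (Finset ι)}
    (hS : S ⊆ A.powersetCard M) {Q : Set (Set ι)} (hQ : ∀ G ∈ S, (G : Set ι) ∈ Q) :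
    #S * ((p : ℝ) ^ M * (1 - p : ℝ) ^ (#A - M)) ≤ setBer(A, p).real Q := by
  classical
  have hsingle (G : Finset ι) (hG : G ∈ S) :
      setBer(A, p).real {(G : Set ι)} = (p : ℝ) ^ M * (1 - p : ℝ) ^ (#A - M) := by
    obtain ⟨hGA, rfl⟩ := Finset.mem_powersetCard.mp (hS hG)
    rw [setBernoulli_real_singleton p (mod_cast hGA) A.finite_toSet, ← Finset.coe_sdiff,
      Set.ncard_coe_finset, Set.ncard_coe_finset, Finset.card_sdiff_of_subset hGA]
  calc _ = ∑ G ∈ S, setBer(A, p).real {(G : Set ι)} := by simp [Finset.sum_congr rfl hsingle]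
    _ = setBer(A, p).real (⋃ G ∈ S, {(G : Set ι)}) := by
      refine (measureReal_biUnion_finset ?_ fun G hG ↦ measurableSet_singleton _).symm
      intro G _ G' _ hne
      simpa using hne
    _ ≤ setBer(A, p).real Q := measureReal_mono (by simpa using hQ)

lemma Pru_mono {α : Type*} {Ω : Finset α} {P Q : α → Prop} (hPQ : ∀ ω ∈ Ω, P ω → Q ω) :
    Pru Ω P ≤ Pru Ω Q := by
  classical
  simp only [Pru]
  gcongr 1
  exact mod_cast Finset.card_le_card fun ω hω ↦ by grind

theorem one_sub_mul_measureReal_setBernoulli_le_Pru [Countable ι] (hp : (p : ℝ) * #A = M)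
    {P : Finset ι → Prop} {Q : Set (Set ι)}
    (hPQ : ∀ G ∈ A.powersetCard M, (G : Set ι) ∉ Q → P G) :
    1 - (#A + 1) * setBer(A, p).real Q ≤ Pru (A.powersetCard M) P := by
  classical
  have hM : M ≤ #A := by
    have : (M : ℝ) ≤ #A := hp ▸ mul_le_of_le_one_left (Nat.cast_nonneg _) p.2.2
    exact_mod_cast this
  have hC : (0 : ℝ) < (#A).choose M := mod_cast Nat.choose_pos hM
  set bad := {G ∈ A.powersetCard M | ¬ P G}
  have hbad : (#bad : ℝ) ≤ (#A).choose M * ((#A + 1) * setBer(A, p).real Q) := calc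
    (#bad : ℝ) ≤ #bad * ((#A + 1) * ((#A).choose M * (p : ℝ) ^ M * (1 - p : ℝ) ^ (#A - M))) :=
        le_mul_of_one_le_right (Nat.cast_nonneg _) (one_le_succ_mul_choose_mul_pow hM hp)
    _ = (#A).choose M * ((#A + 1) * (#bad * ((p : ℝ) ^ M * (1 - p : ℝ) ^ (#A - M)))) := by ring
    _ ≤ (#A).choose M * ((#A + 1) * setBer(A, p).real Q) := by
        gcongr
        refine card_mul_le_measureReal_setBernoulli (Finset.filter_subset _ _) fun G hG ↦ ?_
        by_contra hGQ
        exact (Finset.mem_filter.mp hG).2 (hPQ G (Finset.mem_filter.mp hG).1 hGQ)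
  have hsplit : (#{G ∈ A.powersetCard M | P G} : ℝ) + #bad = (#A).choose M := by
    rw [← Finset.card_powersetCard]
    exact_mod_cast Finset.card_filter_add_card_filter_not (s := A.powersetCard M) P
  simp only [Pru, Finset.card_powersetCard]
  rw [le_div_iff₀ hC]
  linear_combination hbad - hsplit

lemma sum_centeredIndicator_sq {G : Finset ι} {p : ℝ} (hG : G ⊆ A)
    (hp : p * #A = #G) :
    ∑ i ∈ A, centeredIndicator p i (G : Set ι) ^ 2 = #A * (p * (1 - p)) := by
  classical
  have hsq (i : ι) : centeredIndicator p i (G : Set ι) ^ 2 =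
      (1 - 2 * p) * (if i ∈ G then 1 else 0) + p ^ 2 := by
    simp only [centeredIndicator, Set.indicator_apply, Finset.mem_coe, Pi.one_apply]
    split_ifs <;> ring
  have hcard : ∑ i ∈ A, (if i ∈ G then (1 : ℝ) else 0) = #G := by
    rw [Finset.sum_boole, Finset.filter_mem_eq_inter, Finset.inter_eq_right.mpr hG]
  simp only [hsq, Finset.sum_add_distrib, ← Finset.mul_sum, hcard, Finset.sum_const, nsmul_eq_mul]
  linear_combination (2 * p - 1) * hp

end RandomSubset

section DegreeDeviation

open scoped Matrix

variable {V : Type*} [DecidableEq V] (H : SimpleGraph V) [DecidableRel H.Adj]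

lemma incMatrix_mem_Icc (v : V) (e : Sym2 V) : H.incMatrix ℝ v e ∈ Set.Icc 0 1 := by
  rw [H.incMatrix_apply']
  split_ifs <;> simp

variable [Fintype V]

/-- The Gram matrix of the columns of the incidence matrix of `H`: for edges `e` and `f` of `H`
the entry `edgeGram H e f` is the number of their common endpoints. -/
def edgeGram : Matrix (Sym2 V) (Sym2 V) ℝ := (H.incMatrix ℝ)ᵀ * H.incMatrix ℝ

lemma edgeGram_apply (e f : Sym2 V) :
    edgeGram H e f = ∑ v, H.incMatrix ℝ v e * H.incMatrix ℝ v f := rfl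

lemma edgeGram_comm (e f : Sym2 V) : edgeGram H e f = edgeGram H f e := by
  simp only [edgeGram_apply, mul_comm]

lemma edgeGram_self {e : Sym2 V} (he : e ∈ H.edgeFinset) : edgeGram H e e = 2 := by
  rw [edgeGram, H.incMatrix_transpose_mul_diag, if_pos (SimpleGraph.mem_edgeFinset.mp he)]

lemma edgeGram_nonneg (e f : Sym2 V) : 0 ≤ edgeGram H e f :=
  Finset.sum_nonneg fun v _ ↦
    mul_nonneg (incMatrix_mem_Icc H v e).1 (incMatrix_mem_Icc H v f).1

lemma edgeGram_le_two {e : Sym2 V} (he : e ∈ H.edgeFinset) (f : Sym2 V) :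
    edgeGram H e f ≤ 2 := by
  rw [← H.sum_incMatrix_apply_of_mem_edgeSet (R := ℝ) (SimpleGraph.mem_edgeFinset.mp he)]
  exact Finset.sum_le_sum fun v _ ↦
    mul_le_of_le_one_right (incMatrix_mem_Icc H v e).1 (incMatrix_mem_Icc H v f).2

lemma sum_edgeGram_le {e : Sym2 V} (he : e ∈ H.edgeFinset) :
    ∑ f, edgeGram H e f ≤ 2 * H.maxDegree := calc
  _ = ∑ v, H.incMatrix ℝ v e * H.degree v := by
    simp only [edgeGram_apply]
    rw [Finset.sum_comm]
    simp only [← Finset.mul_sum, H.sum_incMatrix_apply]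
  _ ≤ ∑ v, H.incMatrix ℝ v e * H.maxDegree := by
    gcongr with v
    · exact (incMatrix_mem_Icc H v e).1
    · exact H.degree_le_maxDegree v
  _ = _ := by
    rw [← Finset.sum_mul,
      H.sum_incMatrix_apply_of_mem_edgeSet (SimpleGraph.mem_edgeFinset.mp he)]

lemma sum_edgeGram_sq_le {e : Sym2 V} (he : e ∈ H.edgeFinset) :
    ∑ f ∈ H.edgeFinset, edgeGram H e f ^ 2 ≤ 4 * H.maxDegree := calc
  _ ≤ ∑ f, edgeGram H e f ^ 2 := Finset.sum_le_univ_sum_of_nonneg fun f ↦ sq_nonneg _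
  _ ≤ ∑ f, 2 * edgeGram H e f := by
    gcongr with f
    rw [sq]
    exact mul_le_mul_of_nonneg_right (edgeGram_le_two H he f) (edgeGram_nonneg H e f)
  _ ≤ 2 * (2 * H.maxDegree) := by
    rw [← Finset.mul_sum]
    gcongr
    exact sum_edgeGram_le H he
  _ = _ := by ring

lemma sum_sq_sum_incMatrix_mul (x : Sym2 V → ℝ) :
    ∑ v, (∑ e ∈ H.edgeFinset, H.incMatrix ℝ v e * x e) ^ 2 =
      2 * ∑ e ∈ H.edgeFinset, x e ^ 2 +
        ∑ e ∈ H.edgeFinset, ∑ f ∈ H.edgeFinset.erase e, edgeGram H e f * x f * x e := calc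
  _ = ∑ e ∈ H.edgeFinset, ∑ f ∈ H.edgeFinset, edgeGram H e f * x f * x e := by
    simp only [sq, Finset.sum_mul_sum]
    rw [Finset.sum_comm]
    refine Finset.sum_congr rfl fun e _ ↦ ?_
    rw [Finset.sum_comm]
    refine Finset.sum_congr rfl fun f _ ↦ ?_
    simp only [edgeGram_apply, Finset.sum_mul]
    exact Finset.sum_congr rfl fun v _ ↦ by ring
  _ = ∑ e ∈ H.edgeFinset,
        (2 * x e ^ 2 + ∑ f ∈ H.edgeFinset.erase e, edgeGram H e f * x f * x e) := by
    refine Finset.sum_congr rfl fun e he ↦ ?_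
    rw [← Finset.add_sum_erase _ _ he, edgeGram_self H he]
    ring
  _ = _ := by rw [Finset.sum_add_distrib, Finset.mul_sum]

variable {H} {G : Finset (Sym2 V)}

lemma sum_card_filter_mem (hG : ∀ e ∈ G, ¬ e.IsDiag) : ∑ v, #{e ∈ G | v ∈ e} = 2 * #G := by
  calc ∑ v, #{e ∈ G | v ∈ e} = ∑ e ∈ G, #{v | v ∈ e} :=
        Finset.sum_card_bipartiteAbove_eq_sum_card_bipartiteBelow _
    _ = ∑ e ∈ G, 2 := Finset.sum_congr rfl fun e he ↦ by
        rw [← Sym2.card_toFinset_of_not_isDiag e (hG e he)]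
        congr 1
        ext v
        simp
    _ = 2 * #G := by simp [mul_comm]

lemma sum_incMatrix_mul_centeredIndicator (hG : G ⊆ H.edgeFinset) (p : ℝ) (v : V) :
    ∑ e ∈ H.edgeFinset, H.incMatrix ℝ v e * centeredIndicator p e (G : Set (Sym2 V)) =
      #{e ∈ G | v ∈ e} - p * H.degree v := by
  have hdeg : ∑ e ∈ H.edgeFinset, H.incMatrix ℝ v e = H.degree v := by
    rw [← H.sum_incMatrix_apply]
    refine Finset.sum_subset (Finset.subset_univ _) fun e _ he ↦ ?_
    exact H.incMatrix_of_notMem_incidenceSet fun h ↦ he (SimpleGraph.mem_edgeFinset.mpr h.1)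
  have hcount : ∑ e ∈ H.edgeFinset,
      H.incMatrix ℝ v e * (G : Set (Sym2 V)).indicator 1 e = #{e ∈ G | v ∈ e} := by
    rw [Finset.card_filter, Nat.cast_sum, ← Finset.sum_subset hG]
    · refine Finset.sum_congr rfl fun e he ↦ ?_
      have : e ∈ H.edgeSet := SimpleGraph.mem_edgeFinset.mp (hG he)
      simp [H.incMatrix_apply', SimpleGraph.incidenceSet, he, this]
    · intro e _ he
      simp [he]
  simp only [centeredIndicator, mul_sub, Finset.sum_sub_distrib, hcount]
  rw [← Finset.sum_mul, hdeg, mul_comm p]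

theorem one_sub_le_Pru_abs_sum_sq_sub_lt {M : ℕ} {p : unitInterval} (hH : H ≠ ⊥)
    (hp : (p : ℝ) * #H.edgeFinset = M) (y : ℝ≥0) :
    1 - 2 * (#H.edgeFinset + 1) ^ 2 * Real.exp (-y / 2) ≤
      Pru (H.edgeFinset.powersetCard M) fun G ↦
        |∑ v, (#{e ∈ G | v ∈ e} - p * H.degree v : ℝ) ^ 2 -
          2 * (#H.edgeFinset * (p * (1 - p)))| < y * √(#H.edgeFinset * H.maxDegree) := by
  have hE : H.edgeFinset.Nonempty := SimpleGraph.edgeFinset_nonempty.mpr hH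
  have hΔ : 0 < H.maxDegree := Nat.pos_of_ne_zero (SimpleGraph.maxDegree_eq_zero_iff.not.mpr hH)
  have htail := measureReal_mul_sqrt_le_abs_sum_sum_erase_le (σ := 4 * H.maxDegree) (c := 1 / 4)
    hE (by positivity) (by positivity) (edgeGram_comm H)
    (fun e he ↦ mod_cast sum_edgeGram_sq_le H he) (iIndepFun_centeredIndicator _ p)
    (measurable_centeredIndicator (p : ℝ)) (fun e he ↦ hasSubgaussianMGF_centeredIndicator p he) y
  have hscale : 2 * (((1 / 4 : ℝ≥0) : ℝ) * y * √(#H.edgeFinset * (4 * H.maxDegree : ℝ≥0))) =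
      y * √(#H.edgeFinset * H.maxDegree) := by
    push_cast
    rw [show (#H.edgeFinset * (4 * H.maxDegree) : ℝ) = 2 ^ 2 * (#H.edgeFinset * H.maxDegree) by
      ring, Real.sqrt_mul (by positivity), Real.sqrt_sq zero_le_two]
    ring
  rw [hscale] at htail
  refine le_trans ?_ (one_sub_mul_measureReal_setBernoulli_le_Pru hp (Q := {s |
    y * √(#H.edgeFinset * H.maxDegree) ≤ |∑ e ∈ H.edgeFinset, ∑ f ∈ H.edgeFinset.erase e,
      edgeGram H e f * centeredIndicator p f s * centeredIndicator p e s|})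
    fun G hG hform ↦ ?_)
  · rw [sub_le_sub_iff_left]
    calc _ ≤ (#H.edgeFinset + 1) * (2 * (#H.edgeFinset + 1) * Real.exp (-y / 2) : ℝ) := by gcongr
      _ = _ := by ring
  · obtain ⟨hGH, rfl⟩ := Finset.mem_powersetCard.mp hG
    simp only [← sum_incMatrix_mul_centeredIndicator hGH]
    rw [sum_sq_sum_incMatrix_mul, sum_centeredIndicator_sq hGH hp, add_sub_cancel_left]
    exact not_le.mp hform

end DegreeDeviation

section UniformGraph

variable {n M : ℕ}

lemma completeEdges_eq_edgeFinset_top (n : ℕ) :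
    completeEdges n = (⊤ : SimpleGraph (Fin n)).edgeFinset := by
  ext e
  simp [completeEdges]

lemma card_edgeFinset_top (n : ℕ) : (#(⊤ : SimpleGraph (Fin n)).edgeFinset : ℝ) = Nr n := by
  rw [SimpleGraph.card_edgeFinset_top_eq_card_choose_two, Fintype.card_fin, Nat.cast_choose_two, Nr]

lemma graphsM_eq_powersetCard (n M : ℕ) :
    graphsM n M = (⊤ : SimpleGraph (Fin n)).edgeFinset.powersetCard M := by
  ext G
  simp [graphsM, completeEdges_eq_edgeFinset_top, Finset.mem_powersetCard]

lemma dS_univ (G : Finset (Sym2 (Fin n))) (v : Fin n) : dS G univ v = #{e ∈ G | v ∈ e} := by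
  refine Finset.card_bij (fun w _ ↦ s(v, w)) (by simp) (fun _ _ _ _ ↦ Sym2.congr_right.mp) ?_
  intro e he
  obtain ⟨heG, hve⟩ := Finset.mem_filter.mp he
  obtain ⟨w, rfl⟩ := Sym2.mem_iff_exists.mp hve
  exact ⟨w, by simpa using heG, rfl⟩

lemma Vdeg_eq_sum_sq {G : Finset (Sym2 (Fin n))} {p : ℝ}
    (hG : G ⊆ (⊤ : SimpleGraph (Fin n)).edgeFinset) (hp : p * Nr n = #G) :
    Vdeg G = ∑ v, (#{e ∈ G | v ∈ e} - p * (⊤ : SimpleGraph (Fin n)).degree v : ℝ) ^ 2 := by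
  rcases n.eq_zero_or_pos with rfl | hn
  · simp [Vdeg]
  have hmean (v : Fin n) : p * (⊤ : SimpleGraph (Fin n)).degree v = 2 * #G / n := by
    rw [SimpleGraph.complete_graph_degree, Fintype.card_fin, Nat.cast_pred hn, ← hp, Nr]
    field
  have hsum : ∑ v, (#{e ∈ G | v ∈ e} : ℝ) = 2 * #G := mod_cast
    sum_card_filter_mem fun e he ↦ by simpa using hG he
  simp only [Vdeg, dS_univ, hmean, sub_sq, Finset.sum_add_distrib, Finset.sum_sub_distrib,
    ← Finset.sum_mul, ← Finset.mul_sum, hsum, Finset.sum_const, Finset.card_univ, Fintype.card_fin,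
    nsmul_eq_mul]
  field

theorem one_sub_le_PrGnM_abs_Vdeg_sub_le {p : unitInterval} (hn : 2 ≤ n)
    (hp : (p : ℝ) * Nr n = M) (y : ℝ≥0) :
    1 - 2 * (n : ℝ) ^ 4 * Real.exp (-y / 2) ≤
      PrGnM n M fun G ↦ |Vdeg G - 2 * (Nr n * (p * (1 - p)))| ≤ y * (n : ℝ) ^ (3 / 2 : ℝ) := by
  have : Nontrivial (Fin n) := Fin.nontrivial_iff_two_le.mpr hn
  have hn' : (2 : ℝ) ≤ n := mod_cast hn
  have hN : Nr n + 1 ≤ (n : ℝ) ^ 2 := by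
    rw [Nr]
    nlinarith
  have hN0 : 0 ≤ Nr n := by
    rw [← card_edgeFinset_top]
    positivity
  have hscale : √(Nr n * (⊤ : SimpleGraph (Fin n)).maxDegree) ≤ (n : ℝ) ^ (3 / 2 : ℝ) := by
    have hpow : ((n : ℝ) ^ (3 / 2 : ℝ)) ^ 2 = n ^ 2 * n := by
      rw [← Real.rpow_mul_natCast (by positivity)]
      norm_num
      ring
    refine Real.sqrt_le_iff.mpr ⟨by positivity, ?_⟩
    rw [hpow, SimpleGraph.maxDegree_top, Fintype.card_fin]
    gcongr
    · linarith
    · exact n.sub_le 1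
  have h := one_sub_le_Pru_abs_sum_sq_sub_lt (M := M) (p := p) (H := (⊤ : SimpleGraph (Fin n)))
    top_ne_bot (by rwa [card_edgeFinset_top]) y
  rw [card_edgeFinset_top, ← graphsM_eq_powersetCard] at h
  calc _ ≤ 1 - 2 * (Nr n + 1) ^ 2 * Real.exp (-y / 2) := by
        rw [show (n : ℝ) ^ 4 = ((n : ℝ) ^ 2) ^ 2 by ring]
        gcongr
    _ ≤ _ := h
    _ ≤ _ := Pru_mono fun G hG hV ↦ ?_
  rw [graphsM_eq_powersetCard, Finset.mem_powersetCard] at hG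
  rw [Vdeg_eq_sum_sq hG.1 (hp.trans (by rw [hG.2]))]
  exact hV.le.trans (by gcongr)

end UniformGraph

open Filter Asymptotics in
lemma eventually_mul_rpow_mul_exp_neg_rpow_div_le {A k c η ε : ℝ} (hA : 0 < A) (hc : 0 < c)
    (hε : 0 < ε) (hηε : η < ε) :
    ∀ᶠ x : ℝ in atTop, A * x ^ k * Real.exp (-x ^ ε / c) ≤ Real.exp (-x ^ η) := by
  have hconst : (fun _ ↦ Real.log A) =o[atTop] fun x : ℝ ↦ x ^ ε :=
    isLittleO_const_left.mpr <| .inr <| tendsto_norm_atTop_atTop.comp (tendsto_rpow_atTop hε)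
  have hpow : (fun x : ℝ ↦ x ^ η) =o[atTop] fun x ↦ x ^ ε := by
    refine isLittleO_of_tendsto' ?_ ((tendsto_rpow_neg_atTop (sub_pos.mpr hηε)).congr' ?_)
    · filter_upwards [eventually_gt_atTop 0] with x hx h
      exact absurd h (Real.rpow_pos_of_pos hx ε).ne'
    · filter_upwards [eventually_gt_atTop 0] with x hx
      rw [neg_sub, Real.rpow_sub hx]
  have hsmall := (hconst.add ((isLittleO_log_rpow_atTop hε).const_mul_left k)).add hpow
  filter_upwards [hsmall.bound (inv_pos.mpr hc), eventually_gt_atTop 0] with x hx hx0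
  rw [Real.norm_of_nonneg (by positivity : 0 ≤ x ^ ε)] at hx
  calc A * x ^ k * Real.exp (-x ^ ε / c)
      = Real.exp (Real.log A + k * Real.log x + -x ^ ε / c) := by
        rw [Real.exp_add, Real.exp_add, Real.exp_log hA, mul_comm k,
          Real.rpow_def_of_pos hx0]
    _ ≤ Real.exp (-x ^ η) := by
        rw [Real.exp_le_exp, neg_div, div_eq_inv_mul]
        linarith [(le_abs_self _).trans hx]

section Sigma

/-- The quantity `Σ₁₁` as a function of `V`, which measures the deviation of the degrees from
their mean. -/
def sigmaP (n M k : ℕ) (V : ℝ) : ℝ :=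
  (2 * Kr k * Kr (n - k) / ((n:ℝ)^2 * (Nr n)^2 * ((n:ℝ) - 2) * ((n:ℝ) - 3))) *
    ((M:ℝ) * (Nr n - (M:ℝ)) + (((k:ℝ) - 2) / (((n - k : ℕ):ℝ) - 1)) * Nr n * V)

variable {n M k : ℕ}

lemma sq_div_four_le_Nr (hn : 2 ≤ n) : (n : ℝ) ^ 2 / 4 ≤ Nr n := by
  have : (2 : ℝ) ≤ n := mod_cast hn
  rw [Nr]
  nlinarith

lemma Nr_pos (hn : 2 ≤ n) : 0 < Nr n := by
  have : (0 : ℝ) < n := mod_cast (by lia : 0 < n)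
  exact lt_of_lt_of_le (by positivity) (sq_div_four_le_Nr hn)

lemma sq_div_four_le_sub_two_mul_sub_three (hn : 6 ≤ n) :
    (n : ℝ) ^ 2 / 4 ≤ ((n : ℝ) - 2) * ((n : ℝ) - 3) := by
  have : (6 : ℝ) ≤ n := mod_cast hn
  nlinarith

lemma sigmaP_sub_sigmaP (hn : 4 ≤ n) (hkn : k + 2 ≤ n) (V V' : ℝ) :
    sigmaP n M k V - sigmaP n M k V' =
      k * (k - 1) * (k - 2) * (n - k) / (2 * n ^ 2 * Nr n * ((n - 2) * (n - 3))) * (V - V') := by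
  have hn' : (4 : ℝ) ≤ n := mod_cast hn
  have hN : 0 < Nr n := Nr_pos (by lia)
  have hkn' : (k : ℝ) + 2 ≤ n := mod_cast hkn
  have h1 : (n : ℝ) - k - 1 ≠ 0 := by linarith
  have h2 : (n : ℝ) - 2 ≠ 0 := by linarith
  have h3 : (n : ℝ) - 3 ≠ 0 := by linarith
  rw [sigmaP, sigmaP, Kr, Kr, Nat.cast_sub (by lia)]
  field

lemma abs_sigmaP_sub_sigmaP_le (hn : 6 ≤ n) (hk : 2 ≤ k) (hkn : k + 2 ≤ n) (V V' : ℝ) :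
    |sigmaP n M k V - sigmaP n M k V'| ≤ 8 / n ^ 2 * |V - V'| := by
  have : (0 : ℝ) < n := mod_cast (by lia : 0 < n)
  have hk' : (2 : ℝ) ≤ k := mod_cast hk
  have hkn' : (k : ℝ) ≤ n := mod_cast (by lia : k ≤ n)
  have : 0 ≤ (k : ℝ) - 1 := by linarith
  have : 0 ≤ (k : ℝ) - 2 := by linarith
  have : 0 ≤ (n : ℝ) - k := by linarith
  have hN := sq_div_four_le_Nr (n := n) (by lia)
  have hden := sq_div_four_le_sub_two_mul_sub_three hn
  have hN0 : 0 < Nr n := Nr_pos (by lia)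
  have hden0 := (by positivity : (0 : ℝ) < n ^ 2 / 4).trans_le hden
  rw [sigmaP_sub_sigmaP (by lia) hkn, abs_mul, abs_of_nonneg (by positivity)]
  refine mul_le_mul_of_nonneg_right ?_ (abs_nonneg _)
  calc _ ≤ (n * n * n * n : ℝ) / (2 * n ^ 2 * (n ^ 2 / 4) * (n ^ 2 / 4)) := by
        gcongr <;> linarith
    _ = 8 / n ^ 2 := by field

lemma sigmaP_two_mul_sub_lamP {p : ℝ} (hn : 4 ≤ n) (hkn : k + 2 ≤ n) (hp : p * Nr n = M) :
    sigmaP n M k (2 * (Nr n * (p * (1 - p)))) - lamP n M k =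
      p * (1 - p) * (k * (n - k)) * (n ^ 2 * (5 - 6 * k - n) + k * (n + k) * (5 * n - 6)) /
        (2 * n ^ 4 * ((n - 2) * (n - 3))) := by
  have hn' : (4 : ℝ) ≤ n := mod_cast hn
  have hN : 0 < Nr n := Nr_pos (by lia)
  have hkn' : (k : ℝ) + 2 ≤ n := mod_cast hkn
  have h1 : (n : ℝ) - k - 1 ≠ 0 := by linarith
  have h2 : (n : ℝ) - 2 ≠ 0 := by linarith
  have h3 : (n : ℝ) - 3 ≠ 0 := by linarith
  rw [sigmaP, lamP, Kr, Kr, Nat.cast_sub (by lia), ← hp]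
  field

lemma abs_sigmaP_two_mul_sub_lamP_le {p : ℝ} (hn : 6 ≤ n) (hkn : k + 2 ≤ n)
    (hp : p * Nr n = M) (hp0 : 0 ≤ p) (hp1 : p ≤ 1) :
    |sigmaP n M k (2 * (Nr n * (p * (1 - p)))) - lamP n M k| ≤ 20 / n := by
  have hn' : (6 : ℝ) ≤ n := mod_cast hn
  have : (0 : ℝ) < n := by linarith
  have hkn' : (k : ℝ) ≤ n := mod_cast (by lia : k ≤ n)
  have hk0 : (0 : ℝ) ≤ k := k.cast_nonneg
  have hden := sq_div_four_le_sub_two_mul_sub_three hn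
  have hden0 := (by positivity : (0 : ℝ) < n ^ 2 / 4).trans_le hden
  have hcubic : |(n ^ 2 * (5 - 6 * k - n) + k * (n + k) * (5 * n - 6) : ℝ)| ≤ 10 * n ^ 3 := by
    have hkk : k * (n + k : ℝ) ≤ 2 * n ^ 2 := by nlinarith
    rw [abs_le]
    have hneg : n ^ 2 * (5 - 6 * k - n : ℝ) ≤ 0 :=
      mul_nonpos_of_nonneg_of_nonpos (by positivity) (by linarith)
    have hneg' : n ^ 2 * (-(7 * n) : ℝ) ≤ n ^ 2 * (5 - 6 * k - n : ℝ) := by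
      gcongr
      linarith
    have hpos : 0 ≤ k * (n + k) * (5 * n - 6 : ℝ) := mul_nonneg (by positivity) (by linarith)
    have hpos' : k * (n + k) * (5 * n - 6 : ℝ) ≤ 2 * n ^ 2 * (5 * n) := by
      gcongr <;> linarith
    constructor
    · linarith [(by positivity : 0 ≤ (n : ℝ) ^ 3)]
    · linarith
  have hu : p * (1 - p) ∈ Set.Icc 0 1 := ⟨mul_nonneg hp0 (sub_nonneg.mpr hp1), by nlinarith⟩
  have hkk : k * (n - k : ℝ) ∈ Set.Icc 0 (n * n : ℝ) :=
    ⟨mul_nonneg hk0 (sub_nonneg.mpr hkn'), by nlinarith⟩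
  rw [sigmaP_two_mul_sub_lamP (by lia) hkn hp, abs_div, abs_mul,
    abs_of_nonneg (mul_nonneg hu.1 hkk.1), abs_of_pos (a := _ * (_ * _)) (by positivity)]
  calc _ ≤ 1 * (n * n : ℝ) * (10 * n ^ 3) / (2 * n ^ 4 * (n ^ 2 / 4)) := by
        gcongr ?_ * ?_ / (_ * ?_)
        · exact mul_le_mul hu.2 hkk.2 hkk.1 zero_le_one
    _ = 20 / n := by field

lemma lamP_eq {p : ℝ} (hn : Nr n ≠ 0) (hp : p * Nr n = M) :
    lamP n M k = (1 - (k / n) ^ 2) * (k / n : ℝ) ^ 2 / 2 * (p * (1 - p)) := by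
  have hn0 : (n : ℝ) ≠ 0 := fun h ↦ hn (by simp [Nr, h])
  rw [lamP, ← hp]
  field

lemma pow_five_div_two_le_lamP {δ : ℝ} (hδ : 0 ≤ δ) (hn : Nr n ≠ 0) (hM : δ ≤ M / Nr n)
    (hM' : M / Nr n ≤ 1 - δ) (hk : δ ≤ (k : ℝ) / n) (hk' : (k : ℝ) / n ≤ 1 - δ) :
    δ ^ 5 / 2 ≤ lamP n M k := by
  rw [lamP_eq hn (div_mul_cancel₀ _ hn)]
  have hk1 : δ ≤ 1 - (k / n : ℝ) ^ 2 := by nlinarith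
  have hc : δ * δ ^ 2 / 2 ≤ (1 - (k / n) ^ 2) * (k / n : ℝ) ^ 2 / 2 := by
    gcongr
    exact hδ.trans hk1
  have hp : δ * δ ≤ M / Nr n * (1 - M / Nr n) :=
    mul_le_mul hM (by linarith) hδ (hδ.trans hM)
  calc δ ^ 5 / 2 = δ * δ ^ 2 / 2 * (δ * δ) := by ring
    _ ≤ _ := mul_le_mul hc hp (by positivity) (le_trans (by positivity) hc)

theorem one_sub_le_PrGnM_abs_sigmaP_sub_lamP_le {p : unitInterval} (hn : 6 ≤ n) (hk : 2 ≤ k)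
    (hkn : k + 2 ≤ n) (hp : (p : ℝ) * Nr n = M) (y : ℝ≥0) :
    1 - 2 * (n : ℝ) ^ 4 * Real.exp (-y / 2) ≤
      PrGnM n M fun G ↦
        |sigmaP n M k (Vdeg G) - lamP n M k| ≤ 8 * y * (n : ℝ) ^ (-(1 / 2) : ℝ) + 20 / n := by
  have hn0 : (0 : ℝ) < n := mod_cast (by lia : 0 < n)
  have hpow : (n : ℝ) ^ (3 / 2 : ℝ) = n ^ (-(1 / 2) : ℝ) * n ^ 2 := by
    rw [← Real.rpow_natCast, ← Real.rpow_add hn0]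
    norm_num
  refine (one_sub_le_PrGnM_abs_Vdeg_sub_le (by lia) hp y).trans (Pru_mono fun G _ hV ↦ ?_)
  calc |sigmaP n M k (Vdeg G) - lamP n M k|
      ≤ |sigmaP n M k (Vdeg G) - sigmaP n M k (2 * (Nr n * (p * (1 - p))))| +
          |sigmaP n M k (2 * (Nr n * (p * (1 - p)))) - lamP n M k| := abs_sub_le _ _ _
    _ ≤ 8 / n ^ 2 * (y * (n : ℝ) ^ (3 / 2 : ℝ)) + 20 / n :=
        add_le_add
          ((abs_sigmaP_sub_sigmaP_le hn hk hkn _ _).trans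
            (mul_le_mul_of_nonneg_left hV (by positivity)))
          (abs_sigmaP_two_mul_sub_lamP_le hn hkn hp p.2.1 p.2.2)
    _ = 8 * y * (n : ℝ) ^ (-(1 / 2) : ℝ) + 20 / n := by
        rw [hpow]
        field

lemma two_le_and_add_two_le_of_le_div {δ : ℝ} (hδ : 0 < δ) (hn : 2 / δ ≤ n)
    (hk : δ ≤ (k : ℝ) / n) (hk' : (k : ℝ) / n ≤ 1 - δ) : 2 ≤ k ∧ k + 2 ≤ n := by
  have hn0 : (0 : ℝ) < n := (by positivity : 0 < 2 / δ).trans_le hn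
  rw [div_le_iff₀ hδ] at hn
  rw [le_div_iff₀ hn0] at hk
  rw [div_le_iff₀ hn0] at hk'
  constructor <;> rify <;> linarith

lemma mul_rpow_add_div_le {ε : ℝ} (hn : 1 ≤ n) (hε : 0 ≤ ε) :
    8 * (n : ℝ) ^ ε * (n : ℝ) ^ (-(1 / 2) : ℝ) + 20 / n ≤ 28 * (n : ℝ) ^ (-(1 / 2) + ε : ℝ) := by
  have hn' : (1 : ℝ) ≤ n := mod_cast hn
  have hinv : (n : ℝ)⁻¹ ≤ (n : ℝ) ^ (-(1 / 2) + ε : ℝ) := by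
    rw [← Real.rpow_neg_one]
    exact Real.rpow_le_rpow_of_exponent_le hn' (by linarith)
  rw [mul_assoc, ← Real.rpow_add (by linarith), add_comm ε, div_eq_mul_inv (20 : ℝ)]
  linarith

end Sigma

/-- Corollary 2.9: `Σ₁₁ = λ(1 + O(n^(-1/2+ε)))` w.v.h.p..
Fix `δ, ε > 0`. There are `C > 0`, `η > 0`, `n₀` such that for all `n ≥ n₀` and `M, k` with
`M/N, k/n ∈ [δ, 1-δ]`, with probability at least `1 - exp(-n^η)` over `G_{n,M}`,
`|Σ₁₁ - λ| ≤ C·λ·n^(-1/2+ε)`. -/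
theorem stmt_11 (δ ε : ℝ) (hδ : 0 < δ) (hε : 0 < ε) :
    ∃ C > (0:ℝ), ∃ η > (0:ℝ), ∃ n₀ : ℕ, ∀ n ≥ n₀, ∀ M k : ℕ,
      δ ≤ (M : ℝ) / Nr n → (M : ℝ) / Nr n ≤ 1 - δ →
      δ ≤ (k : ℝ) / n → (k : ℝ) / n ≤ 1 - δ →
      PrGnM n M (fun G =>
          |(2 * Kr k * Kr (n - k) / ((n:ℝ)^2 * (Nr n)^2 * ((n:ℝ) - 2) * ((n:ℝ) - 3))) *
              ((M:ℝ) * (Nr n - (M:ℝ)) +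
                (((k:ℝ) - 2) / (((n - k : ℕ):ℝ) - 1)) * Nr n * Vdeg G) -
            lamP n M k|
          ≤ C * lamP n M k * (n:ℝ) ^ (-(1/2 : ℝ) + ε))
        ≥ 1 - Real.exp (-(n:ℝ) ^ η) := by
  obtain ⟨n₀, hn₀⟩ := Filter.eventually_atTop.mp <| tendsto_natCast_atTop_atTop.eventually <|
    (eventually_mul_rpow_mul_exp_neg_rpow_div_le (A := 2) (k := 4) (c := 2) two_pos two_pos
      hε (half_lt_self hε)).and
    ((Filter.eventually_ge_atTop (6 : ℝ)).and (Filter.eventually_ge_atTop (2 / δ)))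
  refine ⟨56 / δ ^ 5, by positivity, ε / 2, by positivity, n₀, fun n hn M k hM hM' hk hk' ↦ ?_⟩
  obtain ⟨htail, hn6, hnδ⟩ := hn₀ n hn
  rw [Real.rpow_ofNat] at htail
  rw [Nat.ofNat_le_cast] at hn6
  have hN : 0 < Nr n := Nr_pos (by lia)
  obtain ⟨hk2, hkn2⟩ := two_le_and_add_two_le_of_le_div hδ hnδ hk hk'
  let p : unitInterval := ⟨M / Nr n, by positivity, by linarith⟩
  let y : ℝ≥0 := ⟨(n : ℝ) ^ ε, by positivity⟩
  have hconc := one_sub_le_PrGnM_abs_sigmaP_sub_lamP_le (p := p) hn6 hk2 hkn2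
    (div_mul_cancel₀ _ hN.ne') y
  refine (sub_le_sub_left htail 1).trans (hconc.trans (Pru_mono fun G _ hG ↦ ?_))
  refine (hG.trans (mul_rpow_add_div_le (by lia) hε.le)).trans ?_
  gcongr
  have hlam := pow_five_div_two_le_lamP hδ.le hN.ne' hM hM' hk hk'
  rw [div_mul_eq_mul_div, le_div_iff₀ (by positivity)]
  linarith
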